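/- Let 𝒜 = {H₁,…,Hₙ} be an indecomposable real central arrangement with n = |𝒜| ≥ 3, m a positive integer, and Φ : Ch^m → Ch an admissible map whose (uniquely determined, j- and σ-independent) associated map is φ : B^m → B. Define K = {S ⊆ {1,…,m} : φ(S₊) = +}. Then: (1) {1,…,m} ∈ K; (2) S ∈ K if and only if S^c ∉ K; and (3) if S₁ ∈ K and S₂ ∈ K then S₁ ∩ S₂ ∈ K. -/

import Mathlib

/-!
The complement rule (2) comes from comparing `σ = 1` with `σ = -1`, which makes `φ` odd, since
every sign vector is realized at a given hyperplane by chambers `C` and `-C`.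

For the intersection rule (3), an indecomposable arrangement with at least two hyperplanes has
linearly dependent forms: if they were independent, the rank of a subarrangement would be its
cardinality, and any partition would decompose the arrangement. Take a nontrivial relation
`∑ cⱼ αⱼ = 0` of minimal support; as hyperplanes are distinct, the support has at least three
elements `j₁, j₂, j₃, …`. By minimality, every sign pattern on the support that is not constant
is the pattern of signs of `cⱼ αⱼ(x)` for some `x` off the hyperplanes
(`exists_point_of_pattern`). So for each `i` there is a chamber `Cᵢ` that has sign `+` at `j₁` iff
`i ∈ S₁`, sign `+` at `j₂` iff `i ∈ S₂`, and sign `+` at the other elements of the support iff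
`i ∉ S₁ ∩ S₂`, where the sign at `j` means the sign of `cⱼ αⱼ`. If `S₁`, `S₂` and `(S₁ ∩ S₂)ᶜ` were all in `K`, then `Φ(C₁,…,Cₘ)` would have
sign `+` on the whole support, contradicting `∑ cⱼ αⱼ = 0`.
-/

noncomputable section
attribute [local instance] Classical.propDecidable

/-- A (nonempty if `ι` is nonempty) real central arrangement of hyperplanes in `ℝ^ℓ`,
given by a family of nonzero defining linear forms with pairwise distinct kernels
(the hyperplanes `H j = ker (form j)`). -/
structure Arrangement (ℓ : ℕ) (ι : Type) [Fintype ι] where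
  form : ι → ((Fin ℓ → ℝ) →ₗ[ℝ] ℝ)
  form_ne_zero : ∀ j, form j ≠ 0
  ker_injective : ∀ j k, LinearMap.ker (form j) = LinearMap.ker (form k) → j = k

namespace Arrangement

variable {ℓ : ℕ} {ι : Type} [Fintype ι]

/-- The complement `ℝ^ℓ ∖ (H₁ ∪ ⋯ ∪ Hₙ)`. -/
def Complement (A : Arrangement ℓ ι) : Set (Fin ℓ → ℝ) :=
  {x | ∀ j, A.form j x ≠ 0}

/-- A chamber is a connected component of the complement. -/
def IsChamber (A : Arrangement ℓ ι) (C : Set (Fin ℓ → ℝ)) : Prop :=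
  ∃ x ∈ A.Complement, C = connectedComponentIn A.Complement x

/-- The set (type) of chambers of the arrangement. -/
abbrev Ch (A : Arrangement ℓ ι) : Type := {C : Set (Fin ℓ → ℝ) // A.IsChamber C}

/-- `εⱼ^σ(C) = στ` when `C ⊆ Hⱼ^τ`; `B = {+,-}` is realized as `ℤˣ`, `+ = 1`, `- = -1`. -/
def eps (A : Arrangement ℓ ι) (j : ι) (σ : ℤˣ) (C : A.Ch) : ℤˣ :=
  σ * (if ∀ x ∈ C.1, 0 < A.form j x then 1 else -1)

/-- `Φ : Ch^m → Ch` is admissible if there is a family `φⱼ^σ : B^m → B` with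
`φⱼ^σ(+,…,+) = +` and `εⱼ^σ ∘ Φ = φⱼ^σ ∘ εⱼ^σ` (componentwise) for all `j, σ`. -/
def IsAdmissible (A : Arrangement ℓ ι) (m : ℕ) (Φ : (Fin m → A.Ch) → A.Ch) : Prop :=
  ∃ φ : ι → ℤˣ → ((Fin m → ℤˣ) → ℤˣ),
    (∀ j σ, φ j σ (fun _ => 1) = 1) ∧
    ∀ j σ 𝒞, A.eps j σ (Φ 𝒞) = φ j σ (fun i => A.eps j σ (𝒞 i))

/-- `r(ℬ) = codim (⋂_{H ∈ ℬ} H)` for the subarrangement indexed by `S`. -/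
def rnkOn (A : Arrangement ℓ ι) (S : Finset ι) : ℕ :=
  ℓ - Module.finrank ℝ ↥(⨅ j ∈ S, LinearMap.ker (A.form j))

/-- `r(𝒜)`. -/
def rnk (A : Arrangement ℓ ι) : ℕ := A.rnkOn Finset.univ

/-- The subarrangement indexed by `S` decomposes as a disjoint union of two nonempty
subarrangements with additive rank. -/
def DecomposableOn (A : Arrangement ℓ ι) (S : Finset ι) : Prop :=
  ∃ S₁ S₂ : Finset ι, S₁.Nonempty ∧ S₂.Nonempty ∧ Disjoint S₁ S₂ ∧ S₁ ∪ S₂ = S ∧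
    A.rnkOn S = A.rnkOn S₁ + A.rnkOn S₂

def IndecomposableOn (A : Arrangement ℓ ι) (S : Finset ι) : Prop := ¬ A.DecomposableOn S

def Decomposable (A : Arrangement ℓ ι) : Prop := A.DecomposableOn Finset.univ

def Indecomposable (A : Arrangement ℓ ι) : Prop := ¬ A.Decomposable

/-- The subarrangement of `A` consisting of the hyperplanes indexed by `S`. -/
def restrict (A : Arrangement ℓ ι) (S : Finset ι) : Arrangement ℓ {j : ι // j ∈ S} where
  form := fun j => A.form j.1
  form_ne_zero := fun j => A.form_ne_zero j.1
  ker_injective := fun j k h => Subtype.ext (A.ker_injective j.1 k.1 h)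

/-- A dependent subarrangement: `r(ℬ) < |ℬ|`. -/
def DependentOn (A : Arrangement ℓ ι) (S : Finset ι) : Prop := A.rnkOn S < S.card

/-- A circuit: a minimally dependent subarrangement. -/
def IsCircuitOn (A : Arrangement ℓ ι) (S : Finset ι) : Prop :=
  A.DependentOn S ∧ ∀ T ⊂ S, ¬ A.DependentOn T

end Arrangement

/-- For `S ⊆ {1,…,m}`, the sign vector `S₊ ∈ B^m`: `+` on `S` and `−` off `S`. -/
def Splus (m : ℕ) (S : Set (Fin m)) : Fin m → ℤˣ := fun i => if i ∈ S then 1 else -1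

namespace Arrangement

variable {ℓ : ℕ} {ι : Type} [Fintype ι]

/-! ### Chambers and signs -/

/-- The chamber containing a given point of the complement. -/
def chamberOf (A : Arrangement ℓ ι) (x : Fin ℓ → ℝ) (hx : x ∈ A.Complement) : A.Ch :=
  ⟨connectedComponentIn A.Complement x, x, hx, rfl⟩

lemma exists_eq_chamberOf (A : Arrangement ℓ ι) (C : A.Ch) :
    ∃ x, ∃ hx : x ∈ A.Complement, C = A.chamberOf x hx := by
  obtain ⟨C, x, hx, rfl⟩ := C
  exact ⟨x, hx, rfl⟩

/-- A form does not change sign on a chamber, so its sign may be read off at one point. -/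
lemma forall_mem_chamberOf_pos_iff (A : Arrangement ℓ ι) (j : ι) (x : Fin ℓ → ℝ)
    (hx : x ∈ A.Complement) :
    (∀ y ∈ (A.chamberOf x hx).1, 0 < A.form j y) ↔ 0 < A.form j x := by
  refine ⟨fun h => h x (mem_connectedComponentIn hx), fun h y hy => ?_⟩
  by_contra hneg
  have hcont : Continuous (A.form j) := LinearMap.continuous_of_finiteDimensional _
  have hpre : IsPreconnected (connectedComponentIn A.Complement x) :=
    isPreconnected_connectedComponentIn
  obtain ⟨z, hz, hz0⟩ := hpre.intermediate_value hy (mem_connectedComponentIn hx)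
    hcont.continuousOn ⟨not_lt.mp hneg, h.le⟩
  exact connectedComponentIn_subset _ _ hz j hz0

lemma eps_chamberOf (A : Arrangement ℓ ι) (j : ι) (σ : ℤˣ) (x : Fin ℓ → ℝ)
    (hx : x ∈ A.Complement) :
    A.eps j σ (A.chamberOf x hx) = σ * (if 0 < A.form j x then 1 else -1) := by
  simp only [eps, forall_mem_chamberOf_pos_iff]

lemma eps_neg (A : Arrangement ℓ ι) (j : ι) (C : A.Ch) :
    A.eps j (-1) C = -A.eps j 1 C := by
  simp only [eps, neg_mul]

/-- With `σ` the sign of `c`, the map `εⱼ^σ` records the sign of `c * αⱼ`. -/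
lemma eps_sign_chamberOf (A : Arrangement ℓ ι) (j : ι) (c : ℝ) (hc : c ≠ 0) (x : Fin ℓ → ℝ)
    (hx : x ∈ A.Complement) :
    A.eps j (if 0 < c then 1 else -1) (A.chamberOf x hx) =
      if 0 < c * A.form j x then 1 else -1 := by
  rw [eps_chamberOf]
  have hf : A.form j x ≠ 0 := hx j
  rcases lt_or_gt_of_ne hc with h1 | h1 <;> rcases lt_or_gt_of_ne hf with h2 | h2
  · simp [h1.not_gt, h2.not_gt, mul_pos_of_neg_of_neg h1 h2]
  · simp [h1.not_gt, h2, (mul_neg_of_neg_of_pos h1 h2).not_gt]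
  · simp [h1, h2.not_gt, (mul_neg_of_pos_of_neg h1 h2).not_gt]
  · simp [h1, h2]

/-- Any point can be moved into the complement without changing the nonzero signs. -/
lemma exists_mem_complement_perturb (A : Arrangement ℓ ι) (x : Fin ℓ → ℝ) :
    ∃ z ∈ A.Complement, ∀ j, A.form j x ≠ 0 → 0 < A.form j x * A.form j z := by
  obtain ⟨y, hy⟩ : ∃ y, ∀ j, A.form j y ≠ 0 := by
    refine Module.Dual.exists_forall_ne_zero_of_forall_exists A.form fun j => ?_
    by_contra! h
    exact A.form_ne_zero j (LinearMap.ext h)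
  have hev : ∀ᶠ t : ℝ in nhdsWithin 0 (Set.Ioi 0), ∀ j, A.form j (x + t • y) ≠ 0 ∧
      (A.form j x ≠ 0 → 0 < A.form j x * A.form j (x + t • y)) := by
    rw [Filter.eventually_all]
    intro j
    simp only [map_add, map_smul, smul_eq_mul]
    by_cases h0 : A.form j x = 0
    · filter_upwards [self_mem_nhdsWithin] with t ht
      have ht' : t ≠ 0 := ne_of_gt ht
      simp [h0, ht', hy j]
    · have hc : Continuous fun t : ℝ => A.form j x * (A.form j x + t * A.form j y) := by
        fun_prop
      have hpos : 0 < A.form j x * (A.form j x + 0 * A.form j y) := by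
        simpa using mul_self_pos.mpr h0
      filter_upwards [mem_nhdsWithin_of_mem_nhds
        (hc.continuousAt.eventually (lt_mem_nhds hpos))] with t ht
      exact ⟨right_ne_zero_of_mul ht.ne', fun _ => ht⟩
  obtain ⟨t, ht⟩ := hev.exists
  exact ⟨x + t • y, fun j => (ht j).1, fun j => (ht j).2⟩

/-- Every sign vector of length `m` is realized at any given hyperplane. -/
lemma exists_eps_eq (A : Arrangement ℓ ι) (j : ι) {m : ℕ} (s : Fin m → ℤˣ) :
    ∃ C : Fin m → A.Ch, ∀ i, A.eps j 1 (C i) = s i := by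
  have key : ∀ u : ℤˣ, ∃ C : A.Ch, A.eps j 1 C = u := by
    intro u
    obtain ⟨z, hz, -⟩ := A.exists_mem_complement_perturb 0
    have hnz : -z ∈ A.Complement := fun k => by simpa using hz k
    have hzj : A.form j z ≠ 0 := hz j
    rcases lt_or_gt_of_ne hzj with h | h <;> rcases Int.units_eq_one_or u with rfl | rfl
    · exact ⟨A.chamberOf (-z) hnz, by simp [eps_chamberOf, h]⟩
    · exact ⟨A.chamberOf z hz, by simp [eps_chamberOf, h.not_gt]⟩
    · exact ⟨A.chamberOf z hz, by simp [eps_chamberOf, h]⟩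
    · exact ⟨A.chamberOf (-z) hnz, by simp [eps_chamberOf, h.not_gt]⟩
  choose f hf using key
  exact ⟨fun i => f (s i), fun i => hf _⟩

/-! ### Linear relations between the forms -/

lemma rnkOn_eq_card (A : Arrangement ℓ ι) (h : LinearIndependent ℝ A.form) (S : Finset ι) :
    A.rnkOn S = S.card := by
  have hS : LinearIndependent ℝ (fun j : S => A.form j) :=
    h.comp (fun j : S => (j : ι)) Subtype.val_injective
  have h1 := finrank_span_eq_card hS
  have h2 := Subspace.finrank_add_finrank_dualCoannihilator_eq
    (Submodule.span ℝ (Set.range fun j : S => A.form j))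
  have h3 : (⨅ j ∈ S, LinearMap.ker (A.form j)) =
      (Submodule.span ℝ (Set.range fun j : S => A.form j)).dualCoannihilator := by
    apply SetLike.coe_injective
    rw [Submodule.coe_dualCoannihilator_span]
    ext x
    simp
  rw [h1, Fintype.card_coe, Module.finrank_fin_fun] at h2
  rw [rnkOn, h3]
  omega

/-- An indecomposable arrangement of at least two hyperplanes carries a nontrivial relation
of minimal support; minimality is stated as: a relation whose support is contained in that of
`c` and misses one element of it vanishes. -/
lemma exists_minimal_relation (A : Arrangement ℓ ι) (hA : A.Indecomposable)
    (hcard : 2 ≤ Fintype.card ι) :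
    ∃ c : ι → ℝ, c ≠ 0 ∧ ∑ j, c j • A.form j = 0 ∧
      ∀ d : ι → ℝ, ∑ j, d j • A.form j = 0 → (∀ j, c j = 0 → d j = 0) →
        (∃ j, c j ≠ 0 ∧ d j = 0) → d = 0 := by
  have hdep : ¬ LinearIndependent ℝ A.form := by
    intro h
    apply hA
    obtain ⟨a, b, hab⟩ := Fintype.exists_pair_of_one_lt_card (show 1 < Fintype.card ι by omega)
    refine ⟨{a}, {a}ᶜ, by simp, ⟨b, by simpa using hab.symm⟩, disjoint_compl_right, by simp, ?_⟩
    simp only [A.rnkOn_eq_card h]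
    rw [Finset.card_add_card_compl, Finset.card_univ]
  rw [Fintype.linearIndependent_iff] at hdep
  push Not at hdep
  obtain ⟨c₀, hc₀, i, hi⟩ := hdep
  let P : Set (ι → ℝ) := {c | c ≠ 0 ∧ ∑ j, c j • A.form j = 0}
  have hP : P.Nonempty := ⟨c₀, fun h => hi (by simp [h]), hc₀⟩
  let size : (ι → ℝ) → ℕ := fun c => (Finset.univ.filter fun j => c j ≠ 0).card
  obtain ⟨c, hc, hmin⟩ := (measure size).wf.has_min P hP
  refine ⟨c, hc.1, hc.2, fun d hd hsub ⟨j, hcj, hdj⟩ => ?_⟩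
  by_contra hd0
  refine hmin d ⟨hd0, hd⟩ (Finset.card_lt_card (Finset.ssubset_iff_subset_ne.mpr ⟨?_, ?_⟩))
  · intro k hk
    simp only [Finset.mem_filter, Finset.mem_univ, true_and] at hk ⊢
    exact fun h => hk (hsub k h)
  · intro h
    have hj : j ∈ Finset.univ.filter fun j => c j ≠ 0 := by simpa using hcj
    rw [← h] at hj
    exact (Finset.mem_filter.mp hj).2 hdj

/-- Given a minimal relation `c`, every nonconstant sign pattern on its support is realized by
the signs of `cⱼ αⱼ` at some point of the complement. -/
lemma exists_point_of_pattern (A : Arrangement ℓ ι) (c : ι → ℝ)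
    (hrel : ∑ j, c j • A.form j = 0)
    (hmin : ∀ d : ι → ℝ, ∑ j, d j • A.form j = 0 → (∀ j, c j = 0 → d j = 0) →
        (∃ j, c j ≠ 0 ∧ d j = 0) → d = 0)
    (p : ι → Prop) (a b : ι) (hca : c a ≠ 0) (hcb : c b ≠ 0) (ha : p a) (hb : ¬ p b) :
    ∃ z ∈ A.Complement, ∀ j, c j ≠ 0 → (0 < c j * A.form j z ↔ p j) := by
  -- Prescribed values of `cⱼ αⱼ`: with `P` positive and `Q` negative places on the support, the
  -- values `Q` and `-P` sum to `P * Q - Q * P = 0`.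
  let T : Finset ι := Finset.univ.filter fun j => c j ≠ 0
  let P : ℝ := (T.filter p).card
  let Q : ℝ := (T.filter fun j => ¬ p j).card
  have hP : 0 < P := Nat.cast_pos.mpr (Finset.card_pos.mpr ⟨a, by simp [T, hca, ha]⟩)
  have hQ : 0 < Q := Nat.cast_pos.mpr (Finset.card_pos.mpr ⟨b, by simp [T, hcb, hb]⟩)
  let v : ι → ℝ := fun j => if c j ≠ 0 then (if p j then Q else -P) else 0
  have hvsum : ∑ j, v j = 0 := by
    simp only [v]
    rw [← Finset.sum_filter, Finset.sum_ite, Finset.sum_const, Finset.sum_const]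
    simp only [nsmul_eq_mul]
    change P * Q + Q * -P = 0
    ring
  let L : (Fin ℓ → ℝ) →ₗ[ℝ] (ι → ℝ) := LinearMap.pi fun j => c j • A.form j
  have hv : v ∈ LinearMap.range L := by
    -- A functional `g` vanishing on the range gives the relation `∑ dⱼ cⱼ αⱼ = 0`, which by
    -- minimality is proportional to `c`. So on vectors supported where `c` is, such as `v`, `g`
    -- is a multiple of the coordinate sum, and it kills `v`.
    by_contra hv
    obtain ⟨g, hgv, hg⟩ := Submodule.exists_le_ker_of_notMem hv
    let d : ι → ℝ := fun j => g (Pi.single j 1)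
    have hgd : ∀ w : ι → ℝ, g w = ∑ j, w j * d j := by
      intro w
      conv_lhs => rw [← LinearMap.sum_single_apply _ w, map_sum]
      refine Finset.sum_congr rfl fun j _ => ?_
      have : Pi.single j (w j) = w j • (Pi.single j 1 : ι → ℝ) := by simp [← Pi.single_smul]
      simp [d, this]
    have he : (fun j => (d j - d a) * c j) = 0 := by
      refine hmin _ ?_ (fun j hj => by simp [hj]) ⟨a, hca, by simp⟩
      refine LinearMap.ext fun x => ?_
      have h1 : g (L x) = 0 := hg ⟨x, rfl⟩
      have h2 := LinearMap.congr_fun hrel x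
      rw [hgd] at h1
      simp only [L, LinearMap.pi_apply, LinearMap.smul_apply, smul_eq_mul, LinearMap.sum_apply,
        LinearMap.zero_apply] at h1 h2 ⊢
      calc ∑ j, (d j - d a) * c j * A.form j x
          = ∑ j, c j * A.form j x * d j - d a * ∑ j, c j * A.form j x := by
            rw [Finset.mul_sum, ← Finset.sum_sub_distrib]
            exact Finset.sum_congr rfl fun j _ => by ring
        _ = 0 := by rw [h1, h2]; ring
    apply hgv
    calc g v = ∑ j, v j * d a := by
          rw [hgd]
          refine Finset.sum_congr rfl fun j _ => ?_
          by_cases hj : c j = 0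
          · simp [v, hj]
          · have := congrFun he j
            simp only [Pi.zero_apply, mul_eq_zero, hj, or_false, sub_eq_zero] at this
            rw [this]
      _ = 0 := by rw [← Finset.sum_mul, hvsum, zero_mul]
  obtain ⟨x, hx⟩ := hv
  have hxv : ∀ j, c j * A.form j x = v j := fun j => congrFun hx j
  obtain ⟨z, hz, hsign⟩ := A.exists_mem_complement_perturb x
  refine ⟨z, hz, fun j hj => ?_⟩
  have hvj : v j = if p j then Q else -P := by simp [v, hj]
  have hvne : v j ≠ 0 := by
    rw [hvj]
    split_ifs
    · exact hQ.ne'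
    · exact (neg_neg_of_pos hP).ne
  have hfx : A.form j x ≠ 0 := fun h => hvne (by rw [← hxv, h, mul_zero])
  have hprod : 0 < v j * (c j * A.form j z) := by
    have h1 := mul_pos (mul_self_pos.mpr hj) (hsign j hfx)
    rw [← hxv]
    linarith [h1, show c j * c j * (A.form j x * A.form j z) =
      c j * A.form j x * (c j * A.form j z) by ring]
  by_cases hp : p j
  · rw [hvj, if_pos hp] at hprod
    exact iff_of_true (pos_of_mul_pos_right hprod hQ.le) hp
  · rw [hvj, if_neg hp] at hprod
    refine iff_of_false (fun h => ?_) hp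
    nlinarith [mul_pos hP h]

/-- As no form vanishes and the hyperplanes are distinct, a nontrivial relation involves at least
three forms. -/
lemma exists_three_of_relation (A : Arrangement ℓ ι) (c : ι → ℝ) (hc : c ≠ 0)
    (hrel : ∑ j, c j • A.form j = 0) :
    ∃ j₁ j₂ j₃, j₁ ≠ j₂ ∧ j₃ ≠ j₁ ∧ j₃ ≠ j₂ ∧ c j₁ ≠ 0 ∧ c j₂ ≠ 0 ∧ c j₃ ≠ 0 := by
  obtain ⟨j₁, h₁⟩ := Function.ne_iff.mp hc
  have h₁' : c j₁ ≠ 0 := h₁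
  obtain ⟨j₂, h12, h₂⟩ : ∃ j₂, j₁ ≠ j₂ ∧ c j₂ ≠ 0 := by
    by_contra! h
    rw [Fintype.sum_eq_single j₁ (fun k hk => by rw [h k hk.symm, zero_smul])] at hrel
    exact (smul_ne_zero h₁' (A.form_ne_zero j₁)) hrel
  obtain ⟨j₃, h31, h32, h₃⟩ : ∃ j₃, j₃ ≠ j₁ ∧ j₃ ≠ j₂ ∧ c j₃ ≠ 0 := by
    by_contra! h
    rw [Fintype.sum_eq_add j₁ j₂ h12
      (fun k hk => by rw [h k hk.1 hk.2, zero_smul])] at hrel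
    apply h12
    apply A.ker_injective
    ext x
    have hx := LinearMap.congr_fun hrel x
    simp only [LinearMap.add_apply, LinearMap.smul_apply, smul_eq_mul,
      LinearMap.zero_apply] at hx
    simp only [LinearMap.mem_ker]
    constructor <;> intro h0 <;> simpa [h0, h₁', h₂] using hx
  exact ⟨j₁, j₂, j₃, h12, h31, h32, h₁', h₂, h₃⟩

end Arrangement

/-- **Lemma.** Let `𝒜` be indecomposable with `|𝒜| ≥ 3`, `Φ` admissible with (`j`- and
`σ`-independent) associated map `φ : B^m → B`, and `K = {S ⊆ {1,…,m} : φ(S₊) = +}`. Then: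
(1) `{1,…,m} ∈ K`; (2) `S ∈ K ↔ Sᶜ ∉ K`; (3) `S₁, S₂ ∈ K → S₁ ∩ S₂ ∈ K`. -/
theorem filter_properties {ℓ : ℕ} {ι : Type} [Fintype ι] (A : Arrangement ℓ ι)
    (hA : A.Indecomposable) (hcard : 3 ≤ Fintype.card ι)
    (m : ℕ) (hm : 0 < m)
    (Φ : (Fin m → A.Ch) → A.Ch)
    (φ : (Fin m → ℤˣ) → ℤˣ)
    (hunit : φ (fun _ => 1) = 1)
    (hcomm : ∀ j σ 𝒞, A.eps j σ (Φ 𝒞) = φ (fun i => A.eps j σ (𝒞 i)))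
    (K : Set (Set (Fin m))) (hK : K = {S | φ (Splus m S) = 1}) :
    Set.univ ∈ K ∧
    (∀ S : Set (Fin m), S ∈ K ↔ Sᶜ ∉ K) ∧
    (∀ S₁ S₂ : Set (Fin m), S₁ ∈ K → S₂ ∈ K → S₁ ∩ S₂ ∈ K) := by
  have hcompl : ∀ S : Set (Fin m), Splus m Sᶜ = -Splus m S := by
    intro S
    ext1 i
    by_cases h : i ∈ S <;> simp [Splus, h]
  have : Nonempty ι := Fintype.card_pos_iff.mp (by omega)
  have hodd : ∀ s : Fin m → ℤˣ, φ (-s) = -φ s := by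
    intro s
    obtain ⟨j⟩ := this
    obtain ⟨C, hC⟩ := A.exists_eps_eq j s
    have h1 := hcomm j 1 C
    have h2 := hcomm j (-1) C
    simp only [A.eps_neg, hC] at h1 h2
    rw [h1] at h2
    exact h2.symm
  have h2 : ∀ S : Set (Fin m), S ∈ K ↔ Sᶜ ∉ K := by
    intro S
    simp only [hK, Set.mem_ofPred_eq, hcompl, hodd]
    rcases Int.units_eq_one_or (φ (Splus m S)) with h | h <;> simp [h]
  refine ⟨?_, h2, fun S₁ S₂ hS₁ hS₂ => ?_⟩
  · have huniv : Splus m Set.univ = fun _ => 1 := by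
      ext1 i
      simp [Splus]
    rw [hK, Set.mem_ofPred_eq, huniv, hunit]
  rw [h2]
  intro hS₃
  obtain ⟨c, hc0, hrel, hmin⟩ := A.exists_minimal_relation hA (by omega)
  obtain ⟨j₁, j₂, j₃, h12, h31, h32, hc₁, hc₂, hc₃⟩ := A.exists_three_of_relation c hc0 hrel
  -- The set of indices `i` for which `cⱼ αⱼ` is to be positive on the `i`-th chamber.
  let F : ι → Set (Fin m) := fun j => if j = j₁ then S₁ else if j = j₂ then S₂ else (S₁ ∩ S₂)ᶜ
  have hF₁ : F j₁ = S₁ := by simp [F]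
  have hF₂ : F j₂ = S₂ := by simp [F, h12.symm]
  have hF₃ : F j₃ = (S₁ ∩ S₂)ᶜ := by simp [F, h31, h32]
  have hFK : ∀ j, F j ∈ K := by
    intro j
    simp only [F]
    split_ifs <;> assumption
  have hpt : ∀ i : Fin m, ∃ z ∈ A.Complement, ∀ j, c j ≠ 0 →
      (0 < c j * A.form j z ↔ i ∈ F j) := by
    intro i
    have hpat := A.exists_point_of_pattern c hrel hmin (fun j => i ∈ F j)
    by_cases hi₁ : i ∈ S₁
    · by_cases hi₂ : i ∈ S₂
      · exact hpat j₁ j₃ hc₁ hc₃ (by simpa [hF₁]) (by simp [hF₃, hi₁, hi₂])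
      · exact hpat j₁ j₂ hc₁ hc₂ (by simpa [hF₁]) (by simpa [hF₂])
    · exact hpat j₃ j₁ hc₃ hc₁ (by simp [hF₃, hi₁]) (by simpa [hF₁])
  choose z hz hzF using hpt
  obtain ⟨y, hy, hΦ⟩ := A.exists_eq_chamberOf (Φ fun i => A.chamberOf (z i) (hz i))
  have hpos : ∀ j, c j ≠ 0 → 0 < c j * A.form j y := by
    intro j hj
    have h := hcomm j (if 0 < c j then 1 else -1) fun i => A.chamberOf (z i) (hz i)
    rw [hΦ, A.eps_sign_chamberOf j (c j) hj] at h
    have hs : (fun i => A.eps j (if 0 < c j then 1 else -1) (A.chamberOf (z i) (hz i))) =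
        Splus m (F j) := by
      ext1 i
      rw [A.eps_sign_chamberOf j (c j) hj]
      simp only [Splus, hzF i j hj]
    have hφ : φ (Splus m (F j)) = 1 := by
      have := hFK j
      rwa [hK] at this
    rw [hs, hφ] at h
    by_contra hneg
    rw [if_neg hneg] at h
    exact absurd h (by decide)
  have hzero := LinearMap.congr_fun hrel y
  simp only [LinearMap.sum_apply, LinearMap.smul_apply, smul_eq_mul,
    LinearMap.zero_apply] at hzero
  refine absurd hzero (Finset.sum_pos' (fun j _ => ?_) ⟨j₁, Finset.mem_univ _, hpos j₁ hc₁⟩).ne'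
  by_cases hj : c j = 0
  · simp [hj]
  · exact (hpos j hj).le
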